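/- Under the MS-LS model with α_i + α_j = α for all pairs i, j, the fully explicit conditional variance of the nodal strength given the previous state l is Var(Y_t | s_{t-1} = l) = Σ_{k=1}^K q_{lk} V_k + Σ_{k=1}^K q_{lk} (μ_k − μ_l*)², where μ_k = (N−1) e^α (4σ_k²β + 1)^{−d/2}, μ_l* = Σ_{k=1}^K q_{lk} μ_k, and V_k = e^{2α}(N−1)(8σ_k²β + 1)^{−d/2} + (N−1)(N−2) e^{2α} (2σ_k²β + 1)^{−d/2}(6σ_k²β + 1)^{−d/2} + (N−1) e^α (4σ_k²β + 1)^{−d/2} − (N−1)² e^{2α} (4σ_k²β + 1)^{−d}. -/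

import Mathlib

open MeasureTheory ProbabilityTheory Real

noncomputable section

/-- Density of the centered isotropic Gaussian `N(0, σ² I_d)` on `ℝ^d`. -/
def gaussPdf (d : ℕ) (σ2 : ℝ) (x : EuclideanSpace ℝ (Fin d)) : ℝ :=
  (2 * Real.pi * σ2) ^ (-(d : ℝ) / 2) * Real.exp (-‖x‖ ^ 2 / (2 * σ2))

/-- The centered isotropic Gaussian measure `N(0, σ² I_d)` on `ℝ^d`. -/
def gaussMeasure (d : ℕ) (σ2 : ℝ) : Measure (EuclideanSpace ℝ (Fin d)) :=
  volume.withDensity fun x => ENNReal.ofReal (gaussPdf d σ2 x)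

/-- Unordered pairs of distinct nodes, represented as ordered pairs `(i, j)` with `i < j`. -/
abbrev Pairs (N : ℕ) : Type := {p : Fin N × Fin N // p.1 < p.2}

/-- Joint law of the latent positions `(Z_i)_{i}` (i.i.d. `N(0, σ² I_d)`) and of the
edge weights `(Y_{ij})_{i<j}`, which given the latent positions are conditionally independent
Poisson variables with intensity `exp (α_i + α_j - β ‖Z_i - Z_j‖²)`. -/
def jointLaw (d N : ℕ) (β : ℝ) (α : Fin N → ℝ) (σ2 : ℝ) :
    Measure ((Fin N → EuclideanSpace ℝ (Fin d)) × (Pairs N → ℕ)) :=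
  (volume.withDensity fun z : Fin N → EuclideanSpace ℝ (Fin d) =>
      ENNReal.ofReal (∏ i, gaussPdf d σ2 (z i))).bind fun z =>
    (Measure.pi fun p : Pairs N =>
        poissonMeasure
          (Real.exp (α p.1.1 + α p.1.2 - β * ‖z p.1.1 - z p.1.2‖ ^ 2)).toNNReal).map
      fun y => (z, y)

/-- The Markov-switching latent space (MS-LS) network model: a hidden `K`-state Markov chain
`s`, state-dependent i.i.d. Gaussian latent positions `Z`, and symmetric edge weights `Y`
that conditionally on the current state (and given the latent positions) are independent
Poisson variables with log-intensity `α i + α j - β ‖Z i k - Z j k‖²`. -/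
structure MSLS (Ω : Type) [MeasurableSpace Ω] where
  /-- the underlying probability measure -/
  P : Measure Ω
  isProb : IsProbabilityMeasure P
  /-- the dimension of the latent space -/
  d : ℕ
  /-- the number of nodes -/
  N : ℕ
  /-- the number of states of the hidden Markov chain -/
  K : ℕ
  β : ℝ
  β_pos : 0 < β
  /-- individual effects -/
  α : Fin N → ℝ
  /-- state-specific variances of the latent positions -/
  σ2 : Fin K → ℝ
  σ2_pos : ∀ k, 0 < σ2 k
  /-- transition probabilities of the hidden Markov chain -/
  q : Fin K → Fin K → ℝ
  q_nonneg : ∀ l k, 0 ≤ q l k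
  q_sum : ∀ l, ∑ k, q l k = 1
  /-- the hidden Markov chain -/
  s : ℕ → Ω → Fin K
  s_meas : ∀ t, Measurable (s t)
  /-- the latent positions in each state -/
  Z : Fin N → Fin K → Ω → EuclideanSpace ℝ (Fin d)
  Z_meas : ∀ i k, Measurable (Z i k)
  /-- the edge weights -/
  Y : Fin N → Fin N → ℕ → Ω → ℕ
  Y_meas : ∀ i j t, Measurable (Y i j t)
  Y_symm : ∀ i j t ω, Y i j t ω = Y j i t ω
  state_pos : ∀ t k, P {ω | s t ω = k} ≠ 0
  /-- Markov transition probabilities -/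
  trans_prob : ∀ t l k, ((P[|{ω | s t ω = l}]) {ω | s (t + 1) ω = k}).toReal = q l k
  /-- conditionally on the current state, the latent positions and the edge weights follow
  the Poisson latent space law -/
  cond_law_state : ∀ t k,
    (P[|{ω | s t ω = k}]).map
        (fun ω => ((fun i => Z i k ω), fun p : Pairs N => Y p.1.1 p.1.2 t ω)) =
      jointLaw d N β α (σ2 k)
  /-- conditionally on the previous and current state, the latent positions and the edge
  weights follow the Poisson latent space law of the current state -/
  cond_law_pair : ∀ t l k, q l k ≠ 0 →
    (P[|{ω | s t ω = l} ∩ {ω | s (t + 1) ω = k}]).map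
        (fun ω => ((fun i => Z i k ω), fun p : Pairs N => Y p.1.1 p.1.2 (t + 1) ω)) =
      jointLaw d N β α (σ2 k)

attribute [instance] MSLS.isProb

/-- The nodal strength `Y_{it} = Σ_{j ≠ i} Y_{ijt}` of node `i` at time `t`. -/
def MSLS.strength {Ω : Type} [MeasurableSpace Ω] (M : MSLS Ω) (i : Fin M.N) (t : ℕ)
    (ω : Ω) : ℕ :=
  ∑ j ∈ Finset.univ.erase i, M.Y i j t ω

end

open scoped ENNReal NNReal

theorem lintegral_poissonMeasure_mul (r : ℝ≥0) (g : ℕ → ℝ≥0∞) :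
    ∫⁻ n, (n : ℝ≥0∞) * g n ∂(poissonMeasure r) = r * ∫⁻ n, g (n + 1) ∂(poissonMeasure r) := by
  have key : ∀ n : ℕ, ENNReal.ofReal (exp (-r) * r ^ (n + 1) / (n + 1).factorial) *
      (((n + 1 : ℕ) : ℝ≥0∞) * g (n + 1)) =
      r * (ENNReal.ofReal (exp (-r) * r ^ n / n.factorial) * g (n + 1)) := by
    intro n
    rw [← mul_assoc, ← mul_assoc]
    congr 1
    rw [← ENNReal.ofReal_natCast, ← ENNReal.ofReal_coe_nnreal, ← ENNReal.ofReal_mul (by positivity),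
      ← ENNReal.ofReal_mul (by positivity)]
    congr 1
    rw [Nat.factorial_succ]
    push_cast
    field_simp
    ring
  simp only [poissonMeasure, lintegral_sum_measure, lintegral_smul_measure, lintegral_dirac,
    smul_eq_mul]
  rw [tsum_eq_zero_add' ENNReal.summable, ← ENNReal.tsum_mul_left]
  simp only [Nat.cast_zero, zero_mul, mul_zero, zero_add]
  exact tsum_congr key

theorem lintegral_natCast_poissonMeasure (r : ℝ≥0) :
    ∫⁻ n, (n : ℝ≥0∞) ∂(poissonMeasure r) = r := by
  simpa using lintegral_poissonMeasure_mul r 1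

theorem lintegral_natCast_sq_poissonMeasure (r : ℝ≥0) :
    ∫⁻ n, (n : ℝ≥0∞) ^ 2 ∂(poissonMeasure r) = (r : ℝ≥0∞) * r + r := by
  simp_rw [sq]
  rw [lintegral_poissonMeasure_mul r (fun n => (n : ℝ≥0∞))]
  push_cast
  rw [lintegral_add_right _ measurable_const, lintegral_natCast_poissonMeasure]
  simp [mul_add]

theorem lintegral_sum_sq_of_iIndepFun {Ω ι : Type*} [MeasurableSpace Ω] {P : Measure Ω} [Fintype ι]
    [DecidableEq ι] {F : ι → Ω → ℝ≥0∞} (hF : ∀ j, Measurable (F j)) (hind : iIndepFun F P) :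
    ∫⁻ ω, (∑ j, F j ω) ^ 2 ∂P = ∑ j, (∫⁻ ω, F j ω ^ 2 ∂P +
      ∑ j' ∈ Finset.univ.erase j, (∫⁻ ω, F j ω ∂P) * ∫⁻ ω, F j' ω ∂P) := by
  simp_rw [sq, Finset.sum_mul_sum]
  rw [lintegral_finsetSum _ fun j _ => by fun_prop]
  refine Finset.sum_congr rfl fun j _ => ?_
  rw [lintegral_finsetSum _ fun j' _ => by fun_prop,
    ← Finset.add_sum_erase _ _ (Finset.mem_univ j)]
  congr 1
  refine Finset.sum_congr rfl fun j' hj' => ?_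
  exact lintegral_mul_eq_lintegral_mul_lintegral_of_indepFun (hF j) (hF j')
    (hind.indepFun (Finset.ne_of_mem_erase hj').symm)

theorem lintegral_natCast_pi_poissonMeasure {κ : Type*} [Fintype κ] (r : κ → ℝ≥0) (p : κ) :
    ∫⁻ y, (y p : ℝ≥0∞) ∂(Measure.pi fun k => poissonMeasure (r k)) = r p := by
  rw [← lintegral_natCast_poissonMeasure,
    ← (measurePreserving_eval (fun k => poissonMeasure (r k)) p).lintegral_comp .of_discrete]

theorem lintegral_sum_sq_pi_poissonMeasure {κ ι : Type*} [Fintype κ] [Fintype ι] (r : κ → ℝ≥0)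
    {e : ι → κ} (he : e.Injective) :
    ∫⁻ y, (∑ j, (y (e j) : ℝ≥0∞)) ^ 2 ∂(Measure.pi fun k => poissonMeasure (r k)) =
      (∑ j, (r (e j) : ℝ≥0∞)) ^ 2 + ∑ j, (r (e j) : ℝ≥0∞) := by
  classical
  have hind : iIndepFun (fun (k : κ) (y : κ → ℕ) => (y k : ℝ≥0∞))
      (Measure.pi fun k => poissonMeasure (r k)) :=
    iIndepFun_pi (X := fun _ (n : ℕ) => (n : ℝ≥0∞)) fun _ => Measurable.of_discrete.aemeasurable
  have hm : ∀ k : κ, Measurable (fun y : κ → ℕ => (y k : ℝ≥0∞)) := fun k =>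
    (Measurable.of_discrete (f := fun n : ℕ => (n : ℝ≥0∞))).comp (measurable_pi_apply k)
  rw [lintegral_sum_sq_of_iIndepFun (fun j => hm (e j)) (hind.precomp he)]
  have h2 : ∀ p, ∫⁻ y, (y p : ℝ≥0∞) ^ 2 ∂(Measure.pi fun k => poissonMeasure (r k)) =
      (r p : ℝ≥0∞) * r p + r p := fun p => by
    rw [← lintegral_natCast_sq_poissonMeasure,
      ← (measurePreserving_eval (fun k => poissonMeasure (r k)) p).lintegral_comp .of_discrete]
  simp_rw [h2, lintegral_natCast_pi_poissonMeasure]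
  rw [sq, Finset.sum_mul_sum, ← Finset.sum_add_distrib]
  refine Finset.sum_congr rfl fun j _ => ?_
  rw [← Finset.add_sum_erase _ _ (Finset.mem_univ j)]
  ring

theorem lintegral_exp_neg_mul_sq_norm (d : ℕ) {b : ℝ} (hb : 0 < b) :
    ∫⁻ v : EuclideanSpace ℝ (Fin d), ENNReal.ofReal (exp (-b * ‖v‖ ^ 2)) =
      ENNReal.ofReal ((π / b) ^ ((d : ℝ) / 2)) := by
  have h := GaussianFourier.integral_rexp_neg_mul_sq_norm (V := EuclideanSpace ℝ (Fin d)) hb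
  rw [finrank_euclideanSpace_fin] at h
  have hi : Integrable fun v : EuclideanSpace ℝ (Fin d) => exp (-b * ‖v‖ ^ 2) := by
    refine Integrable.of_integral_ne_zero ?_
    rw [h]
    positivity
  rw [← ofReal_integral_eq_lintegral_ofReal hi (ae_of_all _ fun _ => (exp_pos _).le), h]

theorem measurable_gaussPdf (d : ℕ) (s : ℝ) : Measurable (gaussPdf d s) := by
  unfold gaussPdf
  fun_prop

theorem gaussPdf_nonneg (d : ℕ) {s : ℝ} (hs : 0 < s) (x : EuclideanSpace ℝ (Fin d)) :
    0 ≤ gaussPdf d s x := by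
  unfold gaussPdf
  positivity

theorem lintegral_exp_neg_mul_sq_norm_sub_gaussMeasure (d : ℕ) {s c : ℝ} (hs : 0 < s) (hc : 0 ≤ c)
    (x : EuclideanSpace ℝ (Fin d)) :
    ∫⁻ w, ENNReal.ofReal (exp (-c * ‖x - w‖ ^ 2)) ∂(gaussMeasure d s) =
      ENNReal.ofReal ((1 + 2 * c * s) ^ (-(d : ℝ) / 2) *
        exp (-(c / (1 + 2 * c * s)) * ‖x‖ ^ 2)) := by
  have hpos : 0 < 1 + 2 * c * s := by positivity
  rw [gaussMeasure, lintegral_withDensity_eq_lintegral_mul _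
    (measurable_gaussPdf d s).ennreal_ofReal (by fun_prop)]
  set b : ℝ := c + 1 / (2 * s) with hb
  have hbpos : 0 < b := by positivity
  have hpt : ∀ w, ((fun x => ENNReal.ofReal (gaussPdf d s x)) *
      fun w => ENNReal.ofReal (exp (-c * ‖x - w‖ ^ 2))) w =
      ENNReal.ofReal ((2 * π * s) ^ (-(d : ℝ) / 2) * exp (-(c / (1 + 2 * c * s)) * ‖x‖ ^ 2)) *
        ENNReal.ofReal (exp (-b * ‖w - (c / b) • x‖ ^ 2)) := by
    intro w
    rw [Pi.mul_apply, ← ENNReal.ofReal_mul (gaussPdf_nonneg d hs w),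
      ← ENNReal.ofReal_mul (by positivity)]
    congr 1
    rw [gaussPdf, mul_assoc _ (exp _), mul_assoc _ (exp _), ← exp_add, ← exp_add]
    congr 2
    rw [norm_sub_sq_real, norm_sub_sq_real, inner_smul_right, norm_smul, real_inner_comm,
      Real.norm_eq_abs, mul_pow, sq_abs]
    have hb' : b = (1 + 2 * c * s) / (2 * s) := by rw [hb]; field_simp; ring
    rw [hb']
    field_simp
    ring
  simp_rw [hpt]
  rw [lintegral_const_mul _ (by fun_prop), lintegral_sub_right_eq_self
    (fun v : EuclideanSpace ℝ (Fin d) => ENNReal.ofReal (exp (-b * ‖v‖ ^ 2))),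
    lintegral_exp_neg_mul_sq_norm d hbpos, ← ENNReal.ofReal_mul (by positivity)]
  congr 1
  rw [mul_right_comm]
  congr 1
  have hb' : π / b = 2 * π * s * (1 + 2 * c * s)⁻¹ := by rw [hb]; field_simp; ring
  rw [hb', mul_rpow (x := 2 * π * s) (by positivity) (by positivity), ← mul_assoc, ← rpow_add (by positivity),
    inv_rpow hpos.le, neg_div, neg_add_cancel, rpow_zero, one_mul, rpow_neg hpos.le]

theorem isProbabilityMeasure_gaussMeasure (d : ℕ) {s : ℝ} (hs : 0 < s) :
    IsProbabilityMeasure (gaussMeasure d s) :=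
  ⟨by simpa using lintegral_exp_neg_mul_sq_norm_sub_gaussMeasure d hs le_rfl 0⟩

theorem withDensity_prod_gaussPdf (d N : ℕ) {s : ℝ} (hs : 0 < s) :
    (volume.withDensity fun z : Fin N → EuclideanSpace ℝ (Fin d) =>
      ENNReal.ofReal (∏ i, gaussPdf d s (z i))) = Measure.pi fun _ => gaussMeasure d s := by
  have := isProbabilityMeasure_gaussMeasure d hs
  have hint : Integrable (gaussPdf d s) := by
    refine ⟨(measurable_gaussPdf d s).aestronglyMeasurable, ?_⟩
    rw [hasFiniteIntegral_iff_ofReal (ae_of_all _ (gaussPdf_nonneg d hs))]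
    have h := measure_lt_top (gaussMeasure d s) Set.univ
    rwa [gaussMeasure, withDensity_apply _ .univ, setLIntegral_univ] at h
  refine (Measure.pi_eq fun S hS => ?_).symm
  rw [withDensity_apply _ (MeasurableSet.univ_pi hS), volume_pi, Measure.restrict_pi_pi,
    ← ofReal_integral_eq_lintegral_ofReal
      (Integrable.fintype_prod (f := fun _ => gaussPdf d s) fun i => hint.restrict)
      (ae_of_all _ fun z => Finset.prod_nonneg fun i _ => gaussPdf_nonneg d hs _),
    integral_fintype_prod_eq_prod (fun _ => gaussPdf d s),
    ENNReal.ofReal_prod_of_nonneg fun i _ => integral_nonneg (gaussPdf_nonneg d hs)]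
  refine Finset.prod_congr rfl fun i _ => ?_
  rw [ofReal_integral_eq_lintegral_ofReal hint.restrict (ae_of_all _ (gaussPdf_nonneg d hs)),
    gaussMeasure, withDensity_apply _ (hS i)]

/-- The strength of node `i` as a function of the weights of the unordered pairs. -/
def pairStrength {N : ℕ} (i : Fin N) (y : Pairs N → ℕ) : ℕ :=
  ∑ j ∈ Finset.univ.erase i,
    if h : i < j then y ⟨(i, j), h⟩ else if h : j < i then y ⟨(j, i), h⟩ else 0

theorem MSLS.strength_eq_pairStrength {Ω : Type} [MeasurableSpace Ω] (M : MSLS Ω) (i : Fin M.N)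
    (t : ℕ) (ω : Ω) : M.strength i t ω = pairStrength i fun p => M.Y p.1.1 p.1.2 t ω := by
  refine Finset.sum_congr rfl fun j hj => ?_
  have hne := Finset.ne_of_mem_erase hj
  split_ifs with h₁ h₂
  · rfl
  · exact M.Y_symm i j t ω
  · exact absurd (le_antisymm (not_lt.1 h₁) (not_lt.1 h₂)) hne

theorem measurable_pairStrength {N : ℕ} (i : Fin N) :
    Measurable fun y : Pairs N → ℕ => (pairStrength i y : ℝ≥0∞) := by
  refine (Measurable.of_discrete (f := fun n : ℕ => (n : ℝ≥0∞))).comp ?_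
  refine Finset.measurable_fun_sum _ fun j _ => ?_
  split_ifs <;> fun_prop

/-- The unordered pair formed by `i` and the `j`-th node other than `i`. -/
def incidentPair {n : ℕ} (i : Fin (n + 1)) (j : Fin n) : Pairs (n + 1) :=
  if h : i < i.succAbove j then ⟨(i, i.succAbove j), h⟩
  else ⟨(i.succAbove j, i), lt_of_le_of_ne (not_lt.1 h) (Fin.succAbove_ne i j)⟩

theorem incidentPair_injective {n : ℕ} (i : Fin (n + 1)) : (incidentPair i).Injective := by
  intro j j' h
  apply Fin.succAbove_right_injective (p := i)
  have hj := Fin.succAbove_ne i j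
  have hj' := Fin.succAbove_ne i j'
  unfold incidentPair at h
  split_ifs at h <;> simp_all [Subtype.ext_iff, Prod.ext_iff]

theorem pairStrength_eq_sum_incidentPair {n : ℕ} (i : Fin (n + 1)) (y : Pairs (n + 1) → ℕ) :
    pairStrength i y = ∑ j, y (incidentPair i j) := by
  have key := Fin.sum_univ_succAbove (fun j => if h : i < j then y ⟨(i, j), h⟩
    else if h : j < i then y ⟨(j, i), h⟩ else 0) i
  rw [← Finset.add_sum_erase _ _ (Finset.mem_univ i)] at key
  refine (add_left_cancel key).trans (Finset.sum_congr rfl fun j _ => ?_)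
  unfold incidentPair
  have hj := Fin.succAbove_ne i j
  split_ifs with h₁ h₂
  · rfl
  · rfl
  · exact absurd (le_antisymm (not_lt.1 h₁) (not_lt.1 h₂)) hj

theorem lintegral_jointLaw {d N : ℕ} {β s : ℝ} {α : Fin N → ℝ} (hs : 0 < s)
    (hne : jointLaw d N β α s ≠ 0) {f : (Pairs N → ℕ) → ℝ≥0∞} (hf : Measurable f) :
    ∫⁻ p, f p.2 ∂(jointLaw d N β α s) =
      ∫⁻ z, ∫⁻ y, f y ∂(Measure.pi fun p : Pairs N => poissonMeasure
        (exp (α p.1.1 + α p.1.2 - β * ‖z p.1.1 - z p.1.2‖ ^ 2)).toNNReal)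
        ∂(Measure.pi fun _ => gaussMeasure d s) := by
  have hf' : Measurable fun p : (Fin N → EuclideanSpace ℝ (Fin d)) × (Pairs N → ℕ) => f p.2 :=
    hf.comp measurable_snd
  unfold jointLaw at hne ⊢
  rw [withDensity_prod_gaussPdf d N hs] at hne ⊢
  rw [Measure.lintegral_bind _ hf'.aemeasurable]
  · refine lintegral_congr fun z => ?_
    rw [lintegral_map hf' (by fun_prop)]
  · by_contra h
    exact hne (by rw [Measure.bind, Measure.map_of_not_aemeasurable h, Measure.join_zero])

theorem lintegral_pi_succAbove {n : ℕ} {E : Type*} [MeasurableSpace E] (γ : Measure E)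
    [SigmaFinite γ] (i : Fin (n + 1)) {f : E → (Fin n → E) → ℝ≥0∞}
    (hf : Measurable (Function.uncurry f)) :
    ∫⁻ z, f (z i) (fun j => z (i.succAbove j)) ∂(Measure.pi fun _ => γ) =
      ∫⁻ x, ∫⁻ w, f x w ∂(Measure.pi fun _ => γ) ∂γ := by
  refine Eq.trans ?_ (lintegral_prod (Function.uncurry f) hf.aemeasurable)
  rw [← (measurePreserving_piFinSuccAbove (fun _ : Fin (n + 1) => γ) i).lintegral_comp hf]
  rfl

section LatentIntegrals

variable {d : ℕ} {s β : ℝ}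

theorem lintegral_exp_neg_mul_sq_norm_gaussMeasure (hs : 0 < s) {c : ℝ} (hc : 0 ≤ c) :
    ∫⁻ w, ENNReal.ofReal (exp (-c * ‖w‖ ^ 2)) ∂(gaussMeasure d s) =
      ENNReal.ofReal ((1 + 2 * c * s) ^ (-(d : ℝ) / 2)) := by
  simpa using lintegral_exp_neg_mul_sq_norm_sub_gaussMeasure d hs hc 0

theorem lintegral_intensity (hs : 0 < s) (hβ : 0 < β) (a : ℝ) (x : EuclideanSpace ℝ (Fin d)) :
    ∫⁻ w, ENNReal.ofReal (exp (a - β * ‖x - w‖ ^ 2)) ∂(gaussMeasure d s) =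
      ENNReal.ofReal (exp a * (1 + 2 * β * s) ^ (-(d : ℝ) / 2)) *
        ENNReal.ofReal (exp (-(β / (1 + 2 * β * s)) * ‖x‖ ^ 2)) := by
  have h : ∀ w, ENNReal.ofReal (exp (a - β * ‖x - w‖ ^ 2)) =
      ENNReal.ofReal (exp a) * ENNReal.ofReal (exp (-β * ‖x - w‖ ^ 2)) := fun w => by
    rw [← ENNReal.ofReal_mul (exp_pos _).le, ← exp_add, neg_mul, sub_eq_add_neg]
  simp_rw [h]
  rw [lintegral_const_mul _ (by fun_prop),
    lintegral_exp_neg_mul_sq_norm_sub_gaussMeasure d hs hβ.le, ← ENNReal.ofReal_mul (by positivity),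
    ← ENNReal.ofReal_mul (by positivity), mul_assoc (exp a)]

theorem ofReal_exp_sq (b r : ℝ) :
    ENNReal.ofReal (exp (b - β * r)) ^ 2 = ENNReal.ofReal (exp (2 * b - 2 * β * r)) := by
  rw [← ENNReal.ofReal_pow (exp_pos _).le, ← exp_nat_mul]
  congr 2
  push_cast
  ring

theorem lintegral_lintegral_intensity (hs : 0 < s) (hβ : 0 < β) (a : ℝ) :
    ∫⁻ x, ∫⁻ w, ENNReal.ofReal (exp (a - β * ‖x - w‖ ^ 2)) ∂(gaussMeasure d s)
        ∂(gaussMeasure d s) =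
      ENNReal.ofReal (exp a * (4 * s * β + 1) ^ (-(d : ℝ) / 2)) := by
  simp_rw [lintegral_intensity hs hβ]
  rw [lintegral_const_mul _ (by fun_prop), lintegral_exp_neg_mul_sq_norm_gaussMeasure hs
    (by positivity), ← ENNReal.ofReal_mul (by positivity), mul_assoc, ← mul_rpow (by positivity)
    (by positivity)]
  congr 3
  field_simp
  ring

theorem lintegral_sq_lintegral_intensity (hs : 0 < s) (hβ : 0 < β) (a : ℝ) :
    ∫⁻ x, (∫⁻ w, ENNReal.ofReal (exp (a - β * ‖x - w‖ ^ 2)) ∂(gaussMeasure d s)) *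
        ∫⁻ w, ENNReal.ofReal (exp (a - β * ‖x - w‖ ^ 2)) ∂(gaussMeasure d s) ∂(gaussMeasure d s) =
      ENNReal.ofReal (exp (2 * a) * (2 * s * β + 1) ^ (-(d : ℝ) / 2) *
        (6 * s * β + 1) ^ (-(d : ℝ) / 2)) := by
  have h : ∀ x : EuclideanSpace ℝ (Fin d),
      (ENNReal.ofReal (exp a * (1 + 2 * β * s) ^ (-(d : ℝ) / 2)) *
        ENNReal.ofReal (exp (-(β / (1 + 2 * β * s)) * ‖x‖ ^ 2))) *
      (ENNReal.ofReal (exp a * (1 + 2 * β * s) ^ (-(d : ℝ) / 2)) *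
        ENNReal.ofReal (exp (-(β / (1 + 2 * β * s)) * ‖x‖ ^ 2))) =
      ENNReal.ofReal (exp (2 * a) * ((1 + 2 * β * s) * (1 + 2 * β * s)) ^ (-(d : ℝ) / 2)) *
        ENNReal.ofReal (exp (-(2 * (β / (1 + 2 * β * s))) * ‖x‖ ^ 2)) := fun x => by
    rw [mul_mul_mul_comm, ← ENNReal.ofReal_mul (by positivity), ← ENNReal.ofReal_mul (by positivity),
      mul_mul_mul_comm, ← exp_add, ← exp_add, mul_rpow (by positivity) (by positivity)]
    ring_nf
  simp_rw [lintegral_intensity hs hβ, h]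
  rw [lintegral_const_mul _ (by fun_prop), lintegral_exp_neg_mul_sq_norm_gaussMeasure hs
    (by positivity), ← ENNReal.ofReal_mul (by positivity), mul_assoc (exp (2 * a)),
    mul_assoc (exp (2 * a)), ← mul_rpow (by positivity) (by positivity),
    ← mul_rpow (by positivity) (by positivity)]
  congr 3
  field_simp
  ring

theorem lintegral_sum_intensity (hs : 0 < s) (hβ : 0 < β) (a : ℝ) {n : ℕ} (i : Fin (n + 1)) :
    ∫⁻ z : Fin (n + 1) → EuclideanSpace ℝ (Fin d),
        ∑ j, ENNReal.ofReal (exp (a - β * ‖z i - z (i.succAbove j)‖ ^ 2))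
        ∂(Measure.pi fun _ => gaussMeasure d s) =
      ENNReal.ofReal (n * exp a * (4 * s * β + 1) ^ (-(d : ℝ) / 2)) := by
  have := isProbabilityMeasure_gaussMeasure d hs
  rw [lintegral_pi_succAbove (gaussMeasure d s) i
    (f := fun x w => ∑ j, ENNReal.ofReal (exp (a - β * ‖x - w j‖ ^ 2))) (by fun_prop)]
  have hin (x : EuclideanSpace ℝ (Fin d)) :
      ∫⁻ w : Fin n → EuclideanSpace ℝ (Fin d),
        ∑ j, ENNReal.ofReal (exp (a - β * ‖x - w j‖ ^ 2))
          ∂(Measure.pi fun _ => gaussMeasure d s) =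
      n * ∫⁻ w, ENNReal.ofReal (exp (a - β * ‖x - w‖ ^ 2)) ∂(gaussMeasure d s) := by
    rw [lintegral_finsetSum _ fun j _ => by fun_prop]
    have hj (j : Fin n) : ∫⁻ w : Fin n → EuclideanSpace ℝ (Fin d),
        ENNReal.ofReal (exp (a - β * ‖x - w j‖ ^ 2)) ∂(Measure.pi fun _ => gaussMeasure d s) =
        ∫⁻ w, ENNReal.ofReal (exp (a - β * ‖x - w‖ ^ 2)) ∂(gaussMeasure d s) :=
      (measurePreserving_eval (fun _ : Fin n => gaussMeasure d s) j).lintegral_comp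
        (f := fun w => ENNReal.ofReal (exp (a - β * ‖x - w‖ ^ 2))) (by fun_prop)
    simp [hj]
  simp_rw [hin]
  rw [lintegral_const_mul' _ _ (ENNReal.natCast_ne_top n), lintegral_lintegral_intensity hs hβ,
    ← ENNReal.ofReal_natCast, ← ENNReal.ofReal_mul (by positivity), mul_assoc (n : ℝ)]

theorem lintegral_sum_intensity_sq (hs : 0 < s) (hβ : 0 < β) (a : ℝ) {n : ℕ} (i : Fin (n + 1)) :
    ∫⁻ z : Fin (n + 1) → EuclideanSpace ℝ (Fin d),
        (∑ j, ENNReal.ofReal (exp (a - β * ‖z i - z (i.succAbove j)‖ ^ 2))) ^ 2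
        ∂(Measure.pi fun _ => gaussMeasure d s) =
      ENNReal.ofReal (exp (2 * a) * n * (8 * s * β + 1) ^ (-(d : ℝ) / 2) +
        n * (n - 1) * exp (2 * a) * (2 * s * β + 1) ^ (-(d : ℝ) / 2) *
          (6 * s * β + 1) ^ (-(d : ℝ) / 2)) := by
  have := isProbabilityMeasure_gaussMeasure d hs
  rw [lintegral_pi_succAbove (gaussMeasure d s) i
    (f := fun x w => (∑ j, ENNReal.ofReal (exp (a - β * ‖x - w j‖ ^ 2))) ^ 2) (by fun_prop)]
  have hin (x : EuclideanSpace ℝ (Fin d)) :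
      ∫⁻ w : Fin n → EuclideanSpace ℝ (Fin d),
        (∑ j, ENNReal.ofReal (exp (a - β * ‖x - w j‖ ^ 2))) ^ 2
          ∂(Measure.pi fun _ => gaussMeasure d s) =
      n * (∫⁻ w, ENNReal.ofReal (exp (2 * a - 2 * β * ‖x - w‖ ^ 2)) ∂(gaussMeasure d s)) +
      (n * (n - 1 : ℕ) : ℝ≥0∞) *
        ((∫⁻ w, ENNReal.ofReal (exp (a - β * ‖x - w‖ ^ 2)) ∂(gaussMeasure d s)) *
          ∫⁻ w, ENNReal.ofReal (exp (a - β * ‖x - w‖ ^ 2)) ∂(gaussMeasure d s)) := by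
    have hind : iIndepFun (fun (j : Fin n) (w : Fin n → EuclideanSpace ℝ (Fin d)) =>
        ENNReal.ofReal (exp (a - β * ‖x - w j‖ ^ 2))) (Measure.pi fun _ => gaussMeasure d s) :=
      iIndepFun_pi (X := fun _ w => ENNReal.ofReal (exp (a - β * ‖x - w‖ ^ 2)))
        fun _ => by fun_prop
    rw [lintegral_sum_sq_of_iIndepFun (fun j => by fun_prop) hind]
    simp_rw [ofReal_exp_sq]
    have hj (b c : ℝ) (j : Fin n) : ∫⁻ w : Fin n → EuclideanSpace ℝ (Fin d),
        ENNReal.ofReal (exp (b - c * ‖x - w j‖ ^ 2)) ∂(Measure.pi fun _ => gaussMeasure d s) =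
        ∫⁻ w, ENNReal.ofReal (exp (b - c * ‖x - w‖ ^ 2)) ∂(gaussMeasure d s) :=
      (measurePreserving_eval (fun _ : Fin n => gaussMeasure d s) j).lintegral_comp
        (f := fun w => ENNReal.ofReal (exp (b - c * ‖x - w‖ ^ 2))) (by fun_prop)
    simp_rw [hj]
    simp [Finset.card_erase_of_mem, mul_assoc]
  have hm (b c : ℝ) : Measurable fun x : EuclideanSpace ℝ (Fin d) =>
      ∫⁻ w, ENNReal.ofReal (exp (b - c * ‖x - w‖ ^ 2)) ∂(gaussMeasure d s) :=
    Measurable.lintegral_prod_right' (f := fun p : EuclideanSpace ℝ (Fin d) × _ =>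
      ENNReal.ofReal (exp (b - c * ‖p.1 - p.2‖ ^ 2))) (by fun_prop)
  have hcast : (n * (n - 1 : ℕ) : ℝ≥0∞) = ENNReal.ofReal (n * (n - 1)) ∧ 0 ≤ (n * (n - 1) : ℝ) := by
    obtain - | m := n
    · simp
    · rw [← ENNReal.ofReal_natCast, ← ENNReal.ofReal_natCast, ← ENNReal.ofReal_mul (by positivity)]
      push_cast [add_sub_cancel_right]
      exact ⟨rfl, by positivity⟩
  have hnn := hcast.2
  simp_rw [hin]
  rw [lintegral_add_left ((hm _ _).const_mul _),
    lintegral_const_mul' _ _ (ENNReal.natCast_ne_top n),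
    lintegral_const_mul _ ((hm _ _).fun_mul (hm _ _)),
    lintegral_lintegral_intensity hs (by positivity), lintegral_sq_lintegral_intensity hs hβ,
    hcast.1, ← ENNReal.ofReal_natCast, ← ENNReal.ofReal_mul (by positivity),
    ← ENNReal.ofReal_mul hnn, ← ENNReal.ofReal_add (by positivity) (by positivity)]
  ring_nf

end LatentIntegrals

theorem toNNReal_intensity_incidentPair {d n : ℕ} {β a : ℝ} {α : Fin (n + 1) → ℝ}
    (hα : ∀ i j, α i + α j = a) (i : Fin (n + 1)) (j : Fin n)
    (z : Fin (n + 1) → EuclideanSpace ℝ (Fin d)) :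
    (exp (α (incidentPair i j).1.1 + α (incidentPair i j).1.2 -
      β * ‖z (incidentPair i j).1.1 - z (incidentPair i j).1.2‖ ^ 2)).toNNReal =
      (exp (a - β * ‖z i - z (i.succAbove j)‖ ^ 2)).toNNReal := by
  rw [hα]
  unfold incidentPair
  split_ifs
  · rfl
  · rw [norm_sub_rev]

theorem lintegral_pairStrength_jointLaw {d N : ℕ} {β s a : ℝ} {α : Fin N → ℝ} (hs : 0 < s)
    (hβ : 0 < β) (hα : ∀ i j, α i + α j = a) (hne : jointLaw d N β α s ≠ 0) (i : Fin N) :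
    ∫⁻ p, (pairStrength i p.2 : ℝ≥0∞) ∂(jointLaw d N β α s) =
      ENNReal.ofReal (((N : ℝ) - 1) * exp a * (4 * s * β + 1) ^ (-(d : ℝ) / 2)) := by
  obtain - | n := N
  · exact i.elim0
  rw [lintegral_jointLaw hs hne (measurable_pairStrength i)]
  simp_rw [pairStrength_eq_sum_incidentPair, Nat.cast_sum]
  push_cast [add_sub_cancel_right]
  rw [← lintegral_sum_intensity hs hβ a i]
  refine lintegral_congr fun z => ?_
  rw [lintegral_finsetSum _ fun j _ => by fun_prop]
  simp_rw [lintegral_natCast_pi_poissonMeasure, toNNReal_intensity_incidentPair hα]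
  rfl

theorem lintegral_pairStrength_sq_jointLaw {d N : ℕ} {β s a : ℝ} {α : Fin N → ℝ} (hs : 0 < s)
    (hβ : 0 < β) (hα : ∀ i j, α i + α j = a) (hne : jointLaw d N β α s ≠ 0) (i : Fin N) :
    ∫⁻ p, (pairStrength i p.2 : ℝ≥0∞) ^ 2 ∂(jointLaw d N β α s) =
      ENNReal.ofReal (exp (2 * a) * ((N : ℝ) - 1) * (8 * s * β + 1) ^ (-(d : ℝ) / 2) +
        ((N : ℝ) - 1) * ((N : ℝ) - 2) * exp (2 * a) * (2 * s * β + 1) ^ (-(d : ℝ) / 2) *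
          (6 * s * β + 1) ^ (-(d : ℝ) / 2) +
        ((N : ℝ) - 1) * exp a * (4 * s * β + 1) ^ (-(d : ℝ) / 2)) := by
  obtain - | n := N
  · exact i.elim0
  rw [lintegral_jointLaw hs hne ((measurable_pairStrength i).pow_const 2)]
  simp_rw [pairStrength_eq_sum_incidentPair, Nat.cast_sum,
    lintegral_sum_sq_pi_poissonMeasure _ (incidentPair_injective i),
    toNNReal_intensity_incidentPair hα]
  have hnn : 0 ≤ exp (2 * a) * n * (8 * s * β + 1) ^ (-(d : ℝ) / 2) +
      n * (n - 1) * exp (2 * a) * (2 * s * β + 1) ^ (-(d : ℝ) / 2) *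
        (6 * s * β + 1) ^ (-(d : ℝ) / 2) := by
    have : 0 ≤ (n * (n - 1) : ℝ) := by
      obtain - | m := n
      · simp
      · push_cast [add_sub_cancel_right]
        positivity
    positivity
  rw [Nat.cast_succ, add_sub_cancel_right, show (n + 1 - 2 : ℝ) = n - 1 by ring,
    ENNReal.ofReal_add hnn (by positivity), ← lintegral_sum_intensity_sq hs hβ a i,
    ← lintegral_sum_intensity hs hβ a i]
  exact lintegral_add_right _ (by fun_prop)

theorem MSLS.lintegral_cond_eq_sum {Ω : Type} [MeasurableSpace Ω] (M : MSLS Ω) (t : ℕ)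
    (l : Fin M.K) (f : Ω → ℝ≥0∞) :
    ∫⁻ ω, f ω ∂(M.P[|{ω | M.s t ω = l}]) = ∑ k, ENNReal.ofReal (M.q l k) *
      ∫⁻ ω, f ω ∂(M.P[|{ω | M.s t ω = l} ∩ {ω | M.s (t + 1) ω = k}]) := by
  have hl : MeasurableSet {ω | M.s t ω = l} := M.s_meas t (measurableSet_singleton l)
  have hk (k) : MeasurableSet {ω | M.s (t + 1) ω = k} :=
    M.s_meas (t + 1) (measurableSet_singleton k)
  have : IsProbabilityMeasure (M.P[|{ω | M.s t ω = l}]) :=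
    cond_isProbabilityMeasure (M.state_pos t l)
  conv_lhs => rw [← sum_meas_smul_cond_fiber (M.s_meas (t + 1)) (M.P[|{ω | M.s t ω = l}])]
  rw [lintegral_finsetSum_measure]
  refine Finset.sum_congr rfl fun k _ => ?_
  rw [lintegral_smul_measure, smul_eq_mul, ← M.trans_prob t l k,
    ENNReal.ofReal_toReal (measure_ne_top _ _),
    ← cond_cond_eq_cond_inter hl (hk k) M.P]
  rfl

theorem MSLS.jointLaw_ne_zero {Ω : Type} [MeasurableSpace Ω] (M : MSLS Ω) (k : Fin M.K) :
    jointLaw M.d M.N M.β M.α (M.σ2 k) ≠ 0 := by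
  have : IsProbabilityMeasure (M.P[|{ω | M.s 0 ω = k}]) :=
    cond_isProbabilityMeasure (M.state_pos 0 k)
  have hZ := M.Z_meas
  have hY := M.Y_meas
  rw [← M.cond_law_state 0 k]
  exact (Measure.isProbabilityMeasure_map (by fun_prop)).ne_zero

theorem MSLS.lintegral_strength {Ω : Type} [MeasurableSpace Ω] (M : MSLS Ω) (i : Fin M.N)
    (t : ℕ) (l : Fin M.K) {g : ℝ≥0∞ → ℝ≥0∞} (hg : Measurable g) :
    ∫⁻ ω, g (M.strength i (t + 1) ω) ∂(M.P[|{ω | M.s t ω = l}]) =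
      ∑ k, ENNReal.ofReal (M.q l k) *
        ∫⁻ p, g (pairStrength i p.2) ∂(jointLaw M.d M.N M.β M.α (M.σ2 k)) := by
  have hZ := M.Z_meas
  have hY := M.Y_meas
  rw [M.lintegral_cond_eq_sum]
  refine Finset.sum_congr rfl fun k _ => ?_
  by_cases hq : M.q l k = 0
  · simp [hq]
  have hgm : Measurable fun p : (Fin M.N → EuclideanSpace ℝ (Fin M.d)) × (Pairs M.N → ℕ) =>
      g (pairStrength i p.2) := (hg.comp (measurable_pairStrength i)).comp measurable_snd
  rw [← M.cond_law_pair t l k hq, lintegral_map hgm (by fun_prop)]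
  simp_rw [M.strength_eq_pairStrength]

theorem variance_natCast_of_lintegral {Ω : Type*} [MeasurableSpace Ω] {P : Measure Ω}
    [IsProbabilityMeasure P] {X : Ω → ℕ} (hX : Measurable X) {m₁ m₂ : ℝ} (h₁ : 0 ≤ m₁)
    (h₂ : 0 ≤ m₂) (hm₁ : ∫⁻ ω, (X ω : ℝ≥0∞) ∂P = ENNReal.ofReal m₁)
    (hm₂ : ∫⁻ ω, (X ω : ℝ≥0∞) ^ 2 ∂P = ENNReal.ofReal m₂) :
    variance (fun ω => (X ω : ℝ)) P = m₂ - m₁ ^ 2 := by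
  have hXr : Measurable fun ω => (X ω : ℝ) := measurable_from_nat.comp hX
  have hmem : MemLp (fun ω => (X ω : ℝ)) 2 P := by
    rw [memLp_two_iff_integrable_sq hXr.aestronglyMeasurable]
    refine ⟨(hXr.pow_const 2).aestronglyMeasurable, ?_⟩
    rw [hasFiniteIntegral_iff_ofReal (ae_of_all _ fun _ => by positivity)]
    simp_rw [ENNReal.ofReal_pow (Nat.cast_nonneg _), ENNReal.ofReal_natCast, hm₂]
    exact ENNReal.ofReal_lt_top
  rw [variance_eq_sub hmem]
  simp_rw [Pi.pow_apply]
  rw [integral_eq_lintegral_of_nonneg_ae (ae_of_all _ fun _ => by positivity)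
    (hXr.pow_const 2).aestronglyMeasurable, integral_eq_lintegral_of_nonneg_ae
    (ae_of_all _ fun _ => by positivity) hXr.aestronglyMeasurable]
  simp_rw [ENNReal.ofReal_pow (Nat.cast_nonneg _), ENNReal.ofReal_natCast, hm₁, hm₂,
    ENNReal.toReal_ofReal h₁, ENNReal.toReal_ofReal h₂]

/-- Under the MS-LS model with `α_i + α_j = α` for all pairs, the fully
explicit conditional variance of the nodal strength given the previous state `l` is
`Var(Y_t | s_{t-1} = l) = Σ_k q_{lk} V_k + Σ_k q_{lk} (μ_k - μ_l*)²` with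
`μ_k = (N-1) e^α (4σ_k²β+1)^{-d/2}`, `μ_l* = Σ_k q_{lk} μ_k`, and
`V_k = e^{2α}(N-1)(8σ_k²β+1)^{-d/2} + (N-1)(N-2)e^{2α}(2σ_k²β+1)^{-d/2}(6σ_k²β+1)^{-d/2}
  + (N-1)e^α(4σ_k²β+1)^{-d/2} - (N-1)²e^{2α}(4σ_k²β+1)^{-d}`. -/
theorem statement15 {Ω : Type} [MeasurableSpace Ω] (M : MSLS Ω) (a : ℝ)
    (hα : ∀ i j, M.α i + M.α j = a) (i : Fin M.N) (t : ℕ) (l : Fin M.K)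
    (μ : Fin M.K → ℝ)
    (hμ : ∀ k, μ k =
      ((M.N : ℝ) - 1) * Real.exp a * (4 * M.σ2 k * M.β + 1) ^ (-(M.d : ℝ) / 2))
    (μstar : ℝ) (hμstar : μstar = ∑ k, M.q l k * μ k)
    (V : Fin M.K → ℝ)
    (hV : ∀ k, V k =
      Real.exp (2 * a) * ((M.N : ℝ) - 1) * (8 * M.σ2 k * M.β + 1) ^ (-(M.d : ℝ) / 2) +
        ((M.N : ℝ) - 1) * ((M.N : ℝ) - 2) * Real.exp (2 * a) *
          (2 * M.σ2 k * M.β + 1) ^ (-(M.d : ℝ) / 2) *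
          (6 * M.σ2 k * M.β + 1) ^ (-(M.d : ℝ) / 2) +
        ((M.N : ℝ) - 1) * Real.exp a * (4 * M.σ2 k * M.β + 1) ^ (-(M.d : ℝ) / 2) -
        ((M.N : ℝ) - 1) ^ 2 * Real.exp (2 * a) * (4 * M.σ2 k * M.β + 1) ^ (-(M.d : ℝ))) :
    variance (fun ω => (M.strength i (t + 1) ω : ℝ)) (M.P[|{ω | M.s t ω = l}]) =
      ∑ k, M.q l k * V k + ∑ k, M.q l k * (μ k - μstar) ^ 2 := by
  have hN : 1 ≤ M.N := i.pos
  have hN1 : (0 : ℝ) ≤ (M.N : ℝ) - 1 := sub_nonneg.2 (by exact_mod_cast hN)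
  have hN2 : (0 : ℝ) ≤ ((M.N : ℝ) - 1) * ((M.N : ℝ) - 2) := by
    obtain h | h := hN.eq_or_lt
    · simp [← h]
    · have : (2 : ℝ) ≤ M.N := by exact_mod_cast h
      exact mul_nonneg hN1 (by linarith)
  have hβ := M.β_pos
  have hprob : IsProbabilityMeasure (M.P[|{ω | M.s t ω = l}]) :=
    cond_isProbabilityMeasure (M.state_pos t l)
  have hV' (k : Fin M.K) : V k + μ k ^ 2 =
      Real.exp (2 * a) * ((M.N : ℝ) - 1) * (8 * M.σ2 k * M.β + 1) ^ (-(M.d : ℝ) / 2) +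
        ((M.N : ℝ) - 1) * ((M.N : ℝ) - 2) * Real.exp (2 * a) *
          (2 * M.σ2 k * M.β + 1) ^ (-(M.d : ℝ) / 2) *
          (6 * M.σ2 k * M.β + 1) ^ (-(M.d : ℝ) / 2) +
        ((M.N : ℝ) - 1) * Real.exp a * (4 * M.σ2 k * M.β + 1) ^ (-(M.d : ℝ) / 2) := by
    have hσ := M.σ2_pos k
    have h₁ : (4 * M.σ2 k * M.β + 1) ^ (-(M.d : ℝ)) =
        ((4 * M.σ2 k * M.β + 1) ^ (-(M.d : ℝ) / 2)) ^ 2 := by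
      rw [← rpow_mul_natCast (by positivity)]
      congr 1
      push_cast
      ring
    have h₂ : Real.exp (2 * a) = Real.exp a ^ 2 := by
      rw [← Real.exp_nat_mul]
      norm_cast
    rw [hV, hμ, h₁, h₂]
    ring
  have hμ_nonneg (k : Fin M.K) : 0 ≤ μ k := by
    have hσ := M.σ2_pos k
    rw [hμ]
    positivity
  have hV_nonneg (k : Fin M.K) : 0 ≤ V k + μ k ^ 2 := by
    have hσ := M.σ2_pos k
    rw [hV']
    positivity
  have hq := M.q_nonneg l
  have hm₁ : ∫⁻ ω, (M.strength i (t + 1) ω : ℝ≥0∞) ∂(M.P[|{ω | M.s t ω = l}]) =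
      ENNReal.ofReal (∑ k, M.q l k * μ k) := by
    rw [ENNReal.ofReal_sum_of_nonneg fun k _ => mul_nonneg (hq k) (hμ_nonneg k),
      M.lintegral_strength i t l (g := fun x => x) measurable_id]
    refine Finset.sum_congr rfl fun k _ => ?_
    rw [ENNReal.ofReal_mul (hq k), hμ]
    congr 1
    exact lintegral_pairStrength_jointLaw (M.σ2_pos k) hβ hα (M.jointLaw_ne_zero k) i
  have hm₂ : ∫⁻ ω, (M.strength i (t + 1) ω : ℝ≥0∞) ^ 2 ∂(M.P[|{ω | M.s t ω = l}]) =
      ENNReal.ofReal (∑ k, M.q l k * (V k + μ k ^ 2)) := by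
    rw [ENNReal.ofReal_sum_of_nonneg fun k _ => mul_nonneg (hq k) (hV_nonneg k),
      M.lintegral_strength i t l (g := fun x => x ^ 2) (measurable_id.pow_const 2)]
    refine Finset.sum_congr rfl fun k _ => ?_
    rw [ENNReal.ofReal_mul (hq k), hV']
    congr 1
    exact lintegral_pairStrength_sq_jointLaw (M.σ2_pos k) hβ hα (M.jointLaw_ne_zero k) i
  have hmeas : Measurable (M.strength i (t + 1)) :=
    Finset.measurable_fun_sum _ fun j _ => M.Y_meas i j (t + 1)
  rw [variance_natCast_of_lintegral hmeas
    (Finset.sum_nonneg fun k _ => mul_nonneg (hq k) (hμ_nonneg k))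
    (Finset.sum_nonneg fun k _ => mul_nonneg (hq k) (hV_nonneg k)) hm₁ hm₂, ← hμstar]
  have hexpand : ∑ k, M.q l k * (μ k - μstar) ^ 2 =
      ∑ k, M.q l k * μ k ^ 2 - 2 * μstar * ∑ k, M.q l k * μ k + μstar ^ 2 * ∑ k, M.q l k := by
    rw [Finset.mul_sum, Finset.mul_sum, ← Finset.sum_sub_distrib, ← Finset.sum_add_distrib]
    exact Finset.sum_congr rfl fun k _ => by ring
  rw [hexpand, ← hμstar, M.q_sum]
  simp_rw [mul_add, Finset.sum_add_distrib]
  ring
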